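/- Let (X_i)_{i ≥ 1} be i.i.d. nonnegative random variables with distribution function F, and write F̄ = 1 − F; assume F̄(x) > 0 for all x > 0 and that F̄ is regularly varying with index −α for some α > 0, i.e. F̄(tx)/F̄(x) → t^{−α} as x → ∞ for every t > 0. Let k ≥ 0 be an integer and let N be an ℕ-valued random variable independent of (X_i)_{i ≥ 1}, with E[N^{k+1}] < ∞; if α ≥ 1, assume additionally E[N^p] < ∞ for some real p > (k+1)·α. Define the residual sum R⁻ := Σ_{i=1}^{N} X_i − max{Σ_{i ∈ s} X_i : s ⊆ {1,…,N}, #s ≤ k} (the sum of all but the k largest among X_1,…,X_N), and note that X_{N−k:N} > x (the (k+1)-th largest value exceeds x) if and only if #{1 ≤ i ≤ N : X_i > x} ≥ k+1. Then, as x → ∞, P(R⁻ > x)/F̄(x)^{k+1} → E[N·(N−1)⋯(N−k)]/(k+1)! and P(#{1 ≤ i ≤ N : X_i > x} ≥ k+1)/F̄(x)^{k+1} → E[N·(N−1)⋯(N−k)]/(k+1)!; in particular P(Σ_{i=1}^{N−k} X_{i:N} > x) ∼ P(X_{N−k:N} > x) ∼ (E[N^{[k+1]}]/(k+1)!)·F̄(x)^{k+1}.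 -/

import Mathlib

open MeasureTheory Filter Topology
open ProbabilityTheory

theorem dyadic_ind {Q : ℝ → Prop} {y0 : ℝ} (h0 : 0 < y0)
    (base : ∀ y, y0 ≤ y → y ≤ 2 * y0 → Q y) (step : ∀ y, y0 ≤ y → Q y → Q (2 * y)) :
    ∀ y, y0 ≤ y → Q y := by
  have key : ∀ n : ℕ, ∀ y, y0 ≤ y → y ≤ 2 ^ n * (2 * y0) → Q y := by
    intro n
    induction n with
    | zero => intro y h1 h2; exact base y h1 (by simpa using h2)
    | succ n ih =>
      intro y h1 h2
      by_cases h : y ≤ 2 * y0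
      · exact base y h1 h
      · push Not at h
        have := step (y / 2) (by linarith) (ih (y / 2) (by linarith) (by rw [pow_succ] at h2; linarith))
        rwa [show 2 * (y / 2) = y by ring] at this
  intro y hy
  obtain ⟨n, hn⟩ := pow_unbounded_of_one_lt (y / (2 * y0)) (one_lt_two)
  refine key n y hy ?_
  rw [div_lt_iff₀ (by linarith)] at hn
  exact hn.le

theorem tail_lower {F : ℝ → ℝ} (hanti : Antitone F) (hpos : ∀ x > 0, 0 < F x) {α β : ℝ}
    (hβ : 0 < β) (h : α < β)
    (hRV : Tendsto (fun x => F (2 * x) / F x) atTop (𝓝 ((2 : ℝ) ^ (-α)))) :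
    ∃ c > 0, ∃ x0 > 0, ∀ x ≥ x0, c * x ^ (-β) ≤ F x := by
  have h1 : (2 : ℝ) ^ (-β) < 2 ^ (-α) :=
    Real.rpow_lt_rpow_of_exponent_lt one_lt_two (by linarith)
  obtain ⟨x0, hx0⟩ := eventually_atTop.1 ((hRV.eventually (lt_mem_nhds h1)).and (eventually_gt_atTop 0))
  have hx0p : 0 < x0 := (hx0 x0 le_rfl).2
  have hc : 0 < x0 ^ β * F (2 * x0) := by
    have := hpos (2 * x0) (by linarith)
    positivity
  refine ⟨_, hc, x0, hx0p, ?_⟩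
  intro x hx
  refine dyadic_ind (Q := fun x => x0 ^ β * F (2 * x0) * x ^ (-β) ≤ F x) hx0p ?_ ?_ x hx
  · intro y h1 h2
    have a1 : F (2 * x0) ≤ F y := hanti h2
    have a2 : x0 ^ β * y ^ (-β) ≤ 1 := by
      rw [Real.rpow_neg (by linarith)]
      have : x0 ^ β ≤ y ^ β := Real.rpow_le_rpow hx0p.le h1 hβ.le
      exact (mul_inv_le_iff₀ (Real.rpow_pos_of_pos (by linarith) _)).2 (by linarith)
    have a3 := hpos (2 * x0) (by linarith)
    calc _ = (x0 ^ β * y ^ (-β)) * F (2 * x0) := by ring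
      _ ≤ 1 * F (2 * x0) := by gcongr
      _ ≤ _ := by linarith
  · intro y hy hQ
    have a0 : 0 < y := by linarith
    have a1 := (hx0 y hy).1
    rw [lt_div_iff₀ (hpos y a0)] at a1
    rw [Real.mul_rpow (by norm_num) a0.le]
    have : (0 : ℝ) < 2 ^ (-β) := by positivity
    calc _ = 2 ^ (-β) * (x0 ^ β * F (2 * x0) * y ^ (-β)) := by ring
      _ ≤ 2 ^ (-β) * F y := by gcongr
      _ ≤ _ := a1.le

theorem tail_upper {F : ℝ → ℝ} (hle : ∀ x, F x ≤ 1) (hpos : ∀ x > 0, 0 < F x) {α β : ℝ}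
    (hβ : 0 < β) (h : β < α)
    (hRV : Tendsto (fun x => F (2 * x) / F x) atTop (𝓝 ((2 : ℝ) ^ (-α)))) :
    ∃ c > 0, ∃ x0 > 0, ∀ x ≥ x0, F x ≤ c * x ^ (-β) := by
  have h1 : (2 : ℝ) ^ (-α) < 2 ^ (-β) :=
    Real.rpow_lt_rpow_of_exponent_lt one_lt_two (by linarith)
  obtain ⟨x0, hx0⟩ := eventually_atTop.1 ((hRV.eventually (gt_mem_nhds h1)).and (eventually_gt_atTop 0))
  have hx0p : 0 < x0 := (hx0 x0 le_rfl).2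
  have hc : 0 < (2 * x0) ^ β := by positivity
  refine ⟨_, hc, x0, hx0p, ?_⟩
  intro x hx
  refine dyadic_ind (Q := fun x => F x ≤ (2 * x0) ^ β * x ^ (-β)) hx0p ?_ ?_ x hx
  · intro y h1 h2
    refine (hle y).trans ?_
    rw [Real.rpow_neg (by linarith)]
    have : y ^ β ≤ (2 * x0) ^ β := Real.rpow_le_rpow (by linarith) h2 hβ.le
    have : 0 < y ^ β := Real.rpow_pos_of_pos (by linarith) _
    rw [← div_eq_mul_inv, le_div_iff₀ this]; linarith
  · intro y hy hQ
    have a0 : 0 < y := by linarith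
    have a1 := (hx0 y hy).1
    rw [div_lt_iff₀ (hpos y a0)] at a1
    rw [Real.mul_rpow (by norm_num) a0.le]
    calc _ ≤ 2 ^ (-β) * F y := a1.le
      _ ≤ 2 ^ (-β) * ((2 * x0) ^ β * y ^ (-β)) := by gcongr
      _ = _ := by ring

/-- bound for the truncated mean -/
theorem trunc_mean {Ω : Type*} [MeasurableSpace Ω] (P : Measure Ω) [IsProbabilityMeasure P]
    {Y : Ω → ℝ} (hY : Measurable Y) (hY0 : ∀ ω, 0 ≤ Y ω) {q : ℝ → ℝ} {r y0 : ℝ} (hy0 : 0 < y0)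
    (hr : 1 < r) (hq : ∀ y ≥ y0, 0 < q y)
    (hqa : ∀ y, y0 ≤ y → y ≤ 2 * y0 → q (2 * y0) ≤ q y)
    (hFq : ∀ y ≥ y0, P.real {ω | y < Y ω} ≤ q y)
    (hqr : ∀ y ≥ y0, r * q y ≤ 2 * q (2 * y)) :
    ∃ C > 0, ∀ y ≥ y0, ∫ ω, min (Y ω) y ∂P ≤ C * (y * q y) := by
  have hint : ∀ y, 0 ≤ y → Integrable (fun ω => min (Y ω) y) P := by
    intro y hy
    refine Integrable.of_bound (C := y) (by fun_prop) (ae_of_all _ fun ω => ?_)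
    rw [Real.norm_eq_abs, abs_of_nonneg (le_min (hY0 ω) hy)]
    exact min_le_right _ _
  have hq2 : 0 < q (2 * y0) := hq _ (by linarith)
  refine ⟨1 / (r - 1) + 2 / q (2 * y0), by have : 0 < r - 1 := by linarith
                                           positivity, ?_⟩
  set C := 1 / (r - 1) + 2 / q (2 * y0) with hC
  have hr' : 0 < r - 1 := by linarith
  have hC1 : 1 / (r - 1) ≤ C := by rw [hC]; have : 0 < 2 / q (2 * y0) := by positivity
                                   linarith
  have hC2 : 2 / q (2 * y0) ≤ C := by rw [hC]; have : 0 < 1 / (r - 1) := by positivity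
                                      linarith
  have hC0 : 0 < C := lt_of_lt_of_le (by positivity) hC1
  refine dyadic_ind (Q := fun y => ∫ ω, min (Y ω) y ∂P ≤ C * (y * q y)) hy0 ?_ ?_
  · intro y h1 h2
    have hy : 0 < y := by linarith
    have b1 : ∫ ω, min (Y ω) y ∂P ≤ y := by
      calc _ ≤ ∫ ω, y ∂P := integral_mono (hint y hy.le) (integrable_const _) fun ω => min_le_right _ _
        _ = y := by simp
    have b2 := hqa y h1 h2
    rw [div_le_iff₀ hq2] at hC2
    have b3 : C * q (2 * y0) ≤ C * q y := by gcongr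
    calc _ ≤ y := b1
      _ ≤ y * (C * q y) := by nlinarith
      _ = _ := by ring
  · intro y hy hQ
    have hyp : 0 < y := by linarith
    have b1 : ∫ ω, min (Y ω) (2 * y) ∂P ≤ ∫ ω, min (Y ω) y ∂P + y * P.real {ω | y < Y ω} := by
      have hm : MeasurableSet {ω | y < Y ω} := measurableSet_lt measurable_const hY
      have : ∫ ω, {ω | y < Y ω}.indicator (fun _ => y) ω ∂P = y * P.real {ω | y < Y ω} := by
        rw [integral_indicator hm]; simp [mul_comm]
      rw [← this, ← integral_add (hint y hyp.le) ((integrable_const _).indicator hm)]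
      refine integral_mono (hint _ (by linarith)) ((hint y hyp.le).add ((integrable_const _).indicator hm)) fun ω => ?_
      by_cases hω : y < Y ω
      · simp only [Set.indicator, Set.mem_ofPred_eq, hω, if_true]
        rw [min_eq_right hω.le]; have := min_le_right (Y ω) (2 * y); linarith
      · simp only [Set.indicator, Set.mem_ofPred_eq, hω, if_false, add_zero]
        push Not at hω
        rw [min_eq_left hω]; exact min_le_left _ _
    have b2 := hFq y hy
    have b3 := hqr y hy
    have b4 := hq y hy
    rw [div_le_iff₀ hr'] at hC1
    have b5 : y * P.real {ω | y < Y ω} ≤ y * q y := by gcongr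
    have b6 : C * y * (r * q y) ≤ C * y * (2 * q (2 * y)) := by gcongr
    have b7 : 0 < y * q y := by positivity
    nlinarith

/-- Chernoff bound -/
theorem chernoff {Ω : Type*} [MeasurableSpace Ω] (P : Measure Ω) [IsProbabilityMeasure P]
    {X : ℕ → Ω → ℝ} (hX : ∀ i, Measurable (X i)) (hX0 : ∀ i ω, 0 ≤ X i ω)
    (hind : iIndepFun X P) (hid : ∀ i, IdentDistrib (X i) (X 0) P P)
    {y Q C : ℝ} (hy : 0 < y) (hQ : 0 < Q) (hC : 0 < C)
    (hmean : ∫ ω, min (X 0 ω) y ∂P ≤ C * (y * Q)) (n M : ℕ) (hn : 0 < n) (hnQ : n * Q ≤ 1) :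
    P.real {ω | M * y < ∑ i ∈ Finset.range n, min (X i ω) y} ≤ Real.exp C * (n * Q) ^ M := by
  have hn' : (0 : ℝ) < n := by exact_mod_cast hn
  set s : ℝ := - Real.log (n * Q) / y with hs
  have hs0 : 0 ≤ s := div_nonneg (by have := Real.log_nonpos (by positivity) hnQ; linarith) hy.le
  have hsy : Real.exp (s * y) = 1 / (n * Q) := by
    rw [hs, div_mul_cancel₀ _ hy.ne', Real.exp_neg, Real.exp_log (by positivity), one_div]
  set Y : ℕ → Ω → ℝ := fun i ω => min (X i ω) y with hYdef
  have hYm : ∀ i, Measurable (Y i) := fun i => (hX i).min measurable_const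
  have hYb : ∀ i ω, 0 ≤ Y i ω ∧ Y i ω ≤ y := fun i ω => ⟨le_min (hX0 i ω) hy.le, min_le_right _ _⟩
  have hYind : iIndepFun Y P := hind.comp (fun _ x => min x y) fun _ => by fun_prop
  have hint : ∀ i, Integrable (Y i) P := fun i => by
    refine Integrable.of_bound (C := y) (hYm i).aestronglyMeasurable (ae_of_all _ fun ω => ?_)
    rw [Real.norm_eq_abs, abs_of_nonneg (hYb i ω).1]; exact (hYb i ω).2
  have hexpint : ∀ i, Integrable (fun ω => Real.exp (s * Y i ω)) P := fun i => by
    refine Integrable.of_bound (C := Real.exp (s * y)) (by have := hYm i; fun_prop) (ae_of_all _ fun ω => ?_)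
    rw [Real.norm_eq_abs, abs_of_pos (Real.exp_pos _)]
    have := (hYb i ω).2
    gcongr
  have hmgf : ∀ i, mgf (Y i) P s ≤ Real.exp (C / n) := by
    intro i
    have e1 : mgf (Y i) P s = mgf (Y 0) P s := by
      refine mgf_congr_of_identDistrib _ _ ((hid i).comp (u := fun x => min x y) (by fun_prop)) s
    rw [e1]
    have e2 : mgf (Y 0) P s ≤ 1 + C / n := by
      unfold mgf
      calc ∫ ω, Real.exp (s * Y 0 ω) ∂P ≤ ∫ ω, (1 + (1 / (n * Q) / y) * Y 0 ω) ∂P := by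
            refine integral_mono (hexpint 0) ((integrable_const _).add ((hint 0).const_mul _)) fun ω => ?_
            obtain ⟨h1, h2⟩ := hYb 0 ω
            have hc := convexOn_exp.2 (Set.mem_univ (s * y)) (Set.mem_univ 0)
              (show 0 ≤ Y 0 ω / y by positivity)
              (show 0 ≤ 1 - Y 0 ω / y by have := (div_le_one hy).2 h2; linarith) (by ring)
            simp only [smul_eq_mul, mul_zero, add_zero, Real.exp_zero, mul_one, hsy] at hc
            rw [show Y 0 ω / y * (s * y) = s * Y 0 ω by field_simp] at hc
            have : 0 ≤ Y 0 ω / y := by positivity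
            calc _ ≤ _ := hc
              _ ≤ Y 0 ω / y * (1 / (n * Q)) + 1 := by linarith
              _ = _ := by ring
        _ = 1 + (1 / (n * Q) / y) * ∫ ω, Y 0 ω ∂P := by
            rw [integral_add (integrable_const _) ((hint 0).const_mul _), integral_const_mul]; simp
        _ ≤ 1 + (1 / (n * Q) / y) * (C * (y * Q)) := by gcongr
        _ = _ := by field_simp
    have := Real.add_one_le_exp (C / n)
    linarith
  have hmgfS : mgf (∑ i ∈ Finset.range n, Y i) P s ≤ Real.exp C := by
    rw [hYind.mgf_sum hYm]
    calc _ ≤ ∏ i ∈ Finset.range n, Real.exp (C / n) :=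
          Finset.prod_le_prod (fun i _ => mgf_nonneg) fun i _ => hmgf i
      _ = Real.exp C := by
          rw [Finset.prod_const, Finset.card_range, ← Real.exp_nat_mul]; congr 1; field_simp
  have hch := measure_ge_le_exp_mul_mgf (μ := P) (X := ∑ i ∈ Finset.range n, Y i) (t := s) (M * y) hs0
    (hYind.integrable_exp_mul_sum hYm fun i _ => hexpint i)
  calc P.real {ω | M * y < ∑ i ∈ Finset.range n, min (X i ω) y}
      ≤ P.real {ω | M * y ≤ (∑ i ∈ Finset.range n, Y i) ω} := by
        refine measureReal_mono fun ω hω => ?_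
        simp only [Set.mem_ofPred_eq, Finset.sum_apply] at hω ⊢
        exact le_of_lt hω
    _ ≤ _ := hch
    _ ≤ Real.exp (-s * (M * y)) * Real.exp C := by gcongr
    _ = _ := by
        rw [show -s * (M * y) = M * (-(s * y)) by ring, Real.exp_nat_mul, Real.exp_neg, hsy]
        simp [mul_comm]

theorem resid_iff (X : ℕ → ℝ) (k n : ℕ) (x : ℝ) :
    (x < (∑ i ∈ Finset.range n, X i) - sSup {y : ℝ | ∃ s : Finset ℕ,
              s ⊆ Finset.range n ∧ s.card ≤ k ∧ y = ∑ i ∈ s, X i}) ↔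
    ∀ s ∈ (Finset.range n).powerset, s.card ≤ k → x < ∑ i ∈ Finset.range n \ s, X i := by
  set S := {y : ℝ | ∃ s : Finset ℕ, s ⊆ Finset.range n ∧ s.card ≤ k ∧ y = ∑ i ∈ s, X i} with hS
  have hfin : S.Finite := by
    refine ((Finset.range n).powerset.finite_toSet.image (fun s => ∑ i ∈ s, X i)).subset ?_
    rintro y ⟨s, h1, h2, rfl⟩
    exact ⟨s, Finset.mem_coe.2 (Finset.mem_powerset.2 h1), rfl⟩
  have hne : S.Nonempty := ⟨0, ∅, by simp, by simp, by simp⟩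
  constructor
  · intro h s hs hk
    have h1 : ∑ i ∈ s, X i ≤ sSup S := le_csSup hfin.bddAbove ⟨s, Finset.mem_powerset.1 hs, hk, rfl⟩
    have h2 := Finset.sum_sdiff (f := X) (Finset.mem_powerset.1 hs)
    linarith
  · intro h
    obtain ⟨s, hs, hk, he⟩ := hne.csSup_mem hfin
    have h2 := Finset.sum_sdiff (f := X) hs
    have := h s (Finset.mem_powerset.2 hs) hk
    rw [he]; linarith

theorem comb_B (X : ℕ → ℝ) (h0 : ∀ i, 0 ≤ X i) (k n : ℕ) (x : ℝ)
    (h : k + 1 ≤ ((Finset.range n).filter (fun i => x < X i)).card) :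
    ∀ s ∈ (Finset.range n).powerset, s.card ≤ k → x < ∑ i ∈ Finset.range n \ s, X i := by
  intro s hs hk
  obtain ⟨i, hi, his⟩ := Finset.exists_mem_notMem_of_card_lt_card (s := s)
    (t := (Finset.range n).filter (fun i => x < X i)) (by omega)
  rw [Finset.mem_filter] at hi
  exact hi.2.trans_le (Finset.single_le_sum (f := X) (fun j _ => h0 j) (Finset.mem_sdiff.2 ⟨hi.1, his⟩))

theorem comb_C (X : ℕ → ℝ) (h0 : ∀ i, 0 ≤ X i) (k n : ℕ) (x y : ℝ) (hy : 0 ≤ y)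
    (h : ∀ s ∈ (Finset.range n).powerset, s.card ≤ k → x < ∑ i ∈ Finset.range n \ s, X i) :
    k + 1 ≤ ((Finset.range n).filter (fun i => y < X i)).card ∨
     x < ∑ i ∈ Finset.range n, min (X i) y := by
  by_contra! hc
  have := h ((Finset.range n).filter (fun i => y < X i)) (by simp) (by omega)
  refine absurd hc.2 (not_le.2 (this.trans_le ?_))
  calc _ = ∑ i ∈ Finset.range n \ (Finset.range n).filter (fun i => y < X i), min (X i) y := by
        refine Finset.sum_congr rfl fun i hi => ?_
        simp only [Finset.mem_sdiff, Finset.mem_filter, not_and, not_lt] at hi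
        rw [min_eq_left (hi.2 hi.1)]
    _ ≤ _ := Finset.sum_le_sum_of_subset_of_nonneg Finset.sdiff_subset
        fun i _ _ => le_min (h0 i) hy

theorem comb_D (X : ℕ → ℝ) (k n : ℕ) (x δ : ℝ) (hx : 0 < x) (hδ : 0 < δ) (hδ1 : δ < 1)
    (h : ∀ s ∈ (Finset.range n).powerset, s.card ≤ k → x < ∑ i ∈ Finset.range n \ s, X i) :
    k + 1 ≤ ((Finset.range n).filter (fun i => (1 - δ) * x < X i)).card ∨
    k + 2 ≤ ((Finset.range n).filter (fun i => (δ / (n + 1)) * x < X i)).card := by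
  by_contra! hc
  obtain ⟨hc1, hc2⟩ := hc
  set t := (Finset.range n).filter (fun i => (δ / (n + 1)) * x < X i) with ht
  have hts : t ⊆ Finset.range n := Finset.filter_subset _ _
  have hbound : ∑ i ∈ Finset.range n \ t, X i ≤ δ * x := by
    calc _ ≤ ∑ i ∈ Finset.range n \ t, (δ / (n + 1)) * x := by
          refine Finset.sum_le_sum fun i hi => ?_
          simp only [ht, Finset.mem_sdiff, Finset.mem_filter, not_and, not_lt] at hi
          exact hi.2 hi.1
      _ = (Finset.range n \ t).card * ((δ / (n + 1)) * x) := by simp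
      _ ≤ (n + 1) * ((δ / (n + 1)) * x) := by
          have : (Finset.range n \ t).card ≤ n := by
            simpa using Finset.card_le_card (Finset.sdiff_subset (s := Finset.range n) (t := t))
          have : ((Finset.range n \ t).card : ℝ) ≤ n := by exact_mod_cast this
          gcongr; linarith
      _ = δ * x := by field_simp
  by_cases hk : t.card ≤ k
  · have := h t (Finset.mem_powerset.2 hts) hk
    nlinarith
  · obtain ⟨i, hit, hi⟩ := Finset.exists_mem_notMem_of_card_lt_card (t := t)
      (s := (Finset.range n).filter (fun i => (1 - δ) * x < X i)) (by omega)
    have hir := hts hit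
    have hi' : X i ≤ (1 - δ) * x := by
      simp only [Finset.mem_filter, not_and, not_lt] at hi; exact hi hir
    have := h (t.erase i) (Finset.mem_powerset.2 ((Finset.erase_subset _ _).trans hts))
      (by rw [Finset.card_erase_of_mem hit]; omega)
    rw [Finset.sdiff_erase hir, Finset.sum_insert (by simp [hit])] at this
    nlinarith

section
variable {Ω : Type*} [MeasurableSpace Ω] (P : Measure Ω) [IsProbabilityMeasure P]
    {X : ℕ → Ω → ℝ}

theorem count_upper (_hX : ∀ i, Measurable (X i)) (hind : iIndepFun X P)
    (hid : ∀ i, IdentDistrib (X i) (X 0) P P) (k n : ℕ) (y : ℝ) :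
    P.real {ω | k ≤ ((Finset.range n).filter (fun i => y < X i ω)).card} ≤
      n.choose k * P.real {ω | y < X 0 ω} ^ k := by
  have hsub : {ω | k ≤ ((Finset.range n).filter (fun i => y < X i ω)).card} ⊆
      ⋃ s ∈ (Finset.range n).powersetCard k, ⋂ i ∈ s, X i ⁻¹' (Set.Ioi y) := by
    intro ω hω
    obtain ⟨s, hs, hc⟩ := Finset.exists_subset_card_eq (Set.mem_ofPred_eq ▸ hω)
    simp only [Set.mem_iUnion, Set.mem_iInter]
    refine ⟨s, Finset.mem_powersetCard.2 ⟨hs.trans (Finset.filter_subset _ _), hc⟩, fun i hi => ?_⟩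
    exact (Finset.mem_filter.1 (hs hi)).2
  refine (measureReal_mono hsub (measure_ne_top _ _)).trans ((measureReal_biUnion_finset_le _ _).trans ?_)
  have : ∀ s ∈ (Finset.range n).powersetCard k, P.real (⋂ i ∈ s, X i ⁻¹' (Set.Ioi y)) =
      P.real {ω | y < X 0 ω} ^ k := by
    intro s hs
    rw [measureReal_def, hind.measure_inter_preimage_eq_mul s (fun _ _ => measurableSet_Ioi)]
    rw [Finset.prod_congr rfl (fun i _ => (hid i).measure_mem_eq measurableSet_Ioi), Finset.prod_const,
      (Finset.mem_powersetCard.1 hs).2, ENNReal.toReal_pow]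
    rfl
  rw [Finset.sum_congr rfl this]
  simp

theorem count_lower (hX : ∀ i, Measurable (X i)) (hind : iIndepFun X P)
    (hid : ∀ i, IdentDistrib (X i) (X 0) P P) (k n : ℕ) (y : ℝ) :
    n.choose k * P.real {ω | y < X 0 ω} ^ k * (1 - P.real {ω | y < X 0 ω}) ^ (n - k) ≤
    P.real {ω | k ≤ ((Finset.range n).filter (fun i => y < X i ω)).card} := by
  classical
  let B : Finset ℕ → ℕ → Set ℝ := fun s i => if i ∈ s then Set.Ioi y else Set.Iic y
  have hBm : ∀ s i, MeasurableSet (B s i) := by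
    intro s i; simp only [B]; split_ifs <;> measurability
  have hsub : (⋃ s ∈ (Finset.range n).powersetCard k, ⋂ i ∈ Finset.range n, X i ⁻¹' (B s i)) ⊆
     {ω | k ≤ ((Finset.range n).filter (fun i => y < X i ω)).card} := by
    intro ω hω
    simp only [Set.mem_iUnion, Set.mem_iInter] at hω
    obtain ⟨s, hs, h⟩ := hω
    obtain ⟨h1, h2⟩ := Finset.mem_powersetCard.1 hs
    rw [Set.mem_ofPred_eq, ← h2]
    refine Finset.card_le_card fun i hi => Finset.mem_filter.2 ⟨h1 hi, ?_⟩
    have := h i (h1 hi)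
    simpa [B, hi] using this
  refine le_trans (le_of_eq ?_) (measureReal_mono hsub)
  rw [measureReal_biUnion_finset]
  · have : ∀ s ∈ (Finset.range n).powersetCard k, P.real (⋂ i ∈ Finset.range n, X i ⁻¹' (B s i)) =
      P.real {ω | y < X 0 ω} ^ k * (1 - P.real {ω | y < X 0 ω}) ^ (n - k) := by
      intro s hs
      obtain ⟨h1, h2⟩ := Finset.mem_powersetCard.1 hs
      rw [measureReal_def, hind.measure_inter_preimage_eq_mul _ (fun i _ => hBm s i)]
      rw [Finset.prod_congr rfl (fun i _ => (hid i).measure_mem_eq (hBm s i)), ENNReal.toReal_prod]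
      rw [← Finset.prod_sdiff h1, mul_comm]
      congr 1
      · rw [Finset.prod_congr rfl (g := fun _ => P.real {ω | y < X 0 ω})]
        · simp [h2]
        · intro i hi; simp only [B, hi, if_true]; rfl
      · have e : P.real (X 0 ⁻¹' (Set.Iic y)) = 1 - P.real {ω | y < X 0 ω} := by
          rw [← probReal_compl_eq_one_sub (measurableSet_lt measurable_const (hX 0))]
          congr 1; ext ω; simp
        rw [Finset.prod_congr rfl (g := fun _ => 1 - P.real {ω | y < X 0 ω})]
        · simp [Finset.card_sdiff_of_subset h1, h2]
        · intro i hi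
          rw [← e]
          simp only [B, (Finset.mem_sdiff.1 hi).2, if_false]; rfl
    rw [Finset.sum_congr rfl this]
    simp [mul_assoc]
  · intro s hs t ht hst
    simp only [Function.onFun]
    rw [Set.disjoint_left]
    intro ω h1 h2
    apply hst
    simp only [Set.mem_iInter] at h1 h2
    have g : ∀ s ∈ (Finset.range n).powersetCard k, (∀ i ∈ Finset.range n, ω ∈ X i ⁻¹' (B s i)) →
       s = (Finset.range n).filter (fun i => y < X i ω) := by
      intro s hs h
      obtain ⟨a, -⟩ := Finset.mem_powersetCard.1 hs
      ext i
      rw [Finset.mem_filter]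
      constructor
      · intro hi; refine ⟨a hi, ?_⟩
        have := h i (a hi)
        simpa [B, hi] using this
      · rintro ⟨hi, hl⟩
        by_contra hn
        have := h i hi
        simp only [B, hn, if_false, Set.mem_preimage, Set.mem_Iic] at this
        linarith
    rw [g s hs h1, g t ht h2]
  · intro s hs
    exact Finset.measurableSet_biInter _ fun i _ => hX i (hBm s i)
end

section
variable {Ω : Type*} [MeasurableSpace Ω] (P : Measure Ω) [IsProbabilityMeasure P]
    {X : ℕ → Ω → ℝ}

theorem tail_zero {Y : Ω → ℝ} (hY : Measurable Y) :
    Tendsto (fun x => P.real {ω | x < Y ω}) atTop (𝓝 0) := by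
  have h := tendsto_measure_iInter_atTop (μ := P) (s := fun x : ℝ => {ω | x < Y ω})
    (fun x => (measurableSet_lt measurable_const hY).nullMeasurableSet)
    (fun a b hab ω hω => lt_of_le_of_lt hab hω) ⟨0, measure_ne_top _ _⟩
  have e : (⋂ x : ℝ, {ω | x < Y ω}) = ∅ := by
    ext ω
    simp only [Set.mem_iInter, Set.mem_empty_iff_false, iff_false, not_forall]
    exact ⟨Y ω, fun h => lt_irrefl (Y ω) h⟩
  rw [e, measure_empty] at h
  have := (ENNReal.tendsto_toReal ENNReal.zero_ne_top).comp h
  exact this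

def Tcount (k n : ℕ) (x : ℝ) : Set (ℕ → ℝ) :=
  {v | k + 1 ≤ ((Finset.range n).filter (fun i => x < v i)).card}

def Tres (k n : ℕ) (x : ℝ) : Set (ℕ → ℝ) :=
  {v | ∀ s ∈ (Finset.range n).powerset, s.card ≤ k → x < ∑ i ∈ Finset.range n \ s, v i}

theorem meas_Tcount (k n : ℕ) (x : ℝ) : MeasurableSet (Tcount k n x) := by
  have : Measurable (fun v : ℕ → ℝ => ((Finset.range n).filter (fun i => x < v i)).card) := by
    simp only [Finset.card_filter]
    refine Finset.measurable_sum _ fun i _ => ?_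
    exact Measurable.ite (measurableSet_lt measurable_const (measurable_pi_apply i))
      measurable_const measurable_const
  exact this measurableSet_Ici

theorem meas_Tres (k n : ℕ) (x : ℝ) : MeasurableSet (Tres k n x) := by
  have : Tres k n x = ⋂ s ∈ (Finset.range n).powerset, ⋂ (_ : s.card ≤ k),
      {v : ℕ → ℝ | x < ∑ i ∈ Finset.range n \ s, v i} := by
    ext v; simp [Tres]
  rw [this]
  refine Finset.measurableSet_biInter _ fun s _ => MeasurableSet.iInter fun _ => ?_
  exact measurableSet_lt measurable_const
    (Finset.measurable_sum _ fun i _ => measurable_pi_apply i)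

theorem seq_meas (hX : ∀ i, Measurable (X i)) : Measurable (fun ω i => X i ω) :=
  measurable_pi_lambda _ hX

/-- limit for the counting event -/
theorem lim_count (hX : ∀ i, Measurable (X i))
    (hind : iIndepFun X P) (hid : ∀ i, IdentDistrib (X i) (X 0) P P)
    (hFpos : ∀ x > (0 : ℝ), 0 < P.real {ω | x < X 0 ω}) (k n : ℕ) :
    Tendsto (fun x => P.real {ω | (fun i => X i ω) ∈ Tcount k n x} / P.real {ω | x < X 0 ω} ^ (k + 1))
      atTop (𝓝 (n.choose (k + 1))) := by
  have h0 := tail_zero P (hX 0)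
  have hl : Tendsto (fun x => (n.choose (k + 1) : ℝ) * (1 - P.real {ω | x < X 0 ω}) ^ (n - (k + 1)))
      atTop (𝓝 (n.choose (k + 1))) := by
    simpa using ((h0.const_sub 1).pow (n - (k + 1))).const_mul (n.choose (k + 1) : ℝ)
  refine tendsto_of_tendsto_of_tendsto_of_le_of_le' hl tendsto_const_nhds ?_ ?_
  · filter_upwards [eventually_gt_atTop 0] with x hx
    have := hFpos x hx
    rw [le_div_iff₀ (by positivity)]
    refine le_trans (le_of_eq ?_) (count_lower P hX hind hid (k + 1) n x)
    ring
  · filter_upwards [eventually_gt_atTop 0] with x hx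
    have := hFpos x hx
    rw [div_le_iff₀ (by positivity)]
    exact count_upper P hX hind hid (k + 1) n x

theorem lim_res (hX : ∀ i, Measurable (X i)) (hX0 : ∀ i ω, 0 ≤ X i ω)
    (hind : iIndepFun X P) (hid : ∀ i, IdentDistrib (X i) (X 0) P P)
    (hFpos : ∀ x > (0 : ℝ), 0 < P.real {ω | x < X 0 ω}) {α : ℝ}
    (hRV : ∀ t > (0 : ℝ), Tendsto (fun x : ℝ =>
      P.real {ω | t * x < X 0 ω} / P.real {ω | x < X 0 ω}) atTop (𝓝 (t ^ (-α)))) (k n : ℕ) :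
    Tendsto (fun x => P.real {ω | (fun i => X i ω) ∈ Tres k n x} / P.real {ω | x < X 0 ω} ^ (k + 1))
      atTop (𝓝 (n.choose (k + 1))) := by
  have hlc := lim_count P hX hind hid hFpos k n
  have h0 := tail_zero P (hX 0)
  rw [tendsto_order]
  constructor
  · intro a ha
    filter_upwards [hlc.eventually (lt_mem_nhds ha), eventually_gt_atTop 0] with x hx hx0
    have := hFpos x hx0
    refine hx.trans_le ?_
    have hsub : {ω | (fun i => X i ω) ∈ Tcount k n x} ⊆ {ω | (fun i => X i ω) ∈ Tres k n x} :=
      fun ω hω => comb_B (fun i => X i ω) (fun i => hX0 i ω) k n x hω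
    have hle := measureReal_mono (μ := P) hsub (measure_ne_top _ _)
    exact div_le_div_of_nonneg_right hle (by positivity)
  · intro b hb
    have hcont : Tendsto (fun δ : ℝ => (n.choose (k + 1) : ℝ) * ((1 - δ) ^ (-α)) ^ (k + 1))
        (𝓝[>] 0) (𝓝 (n.choose (k + 1))) := by
      have : ContinuousAt (fun δ : ℝ => (n.choose (k + 1) : ℝ) * ((1 - δ) ^ (-α)) ^ (k + 1)) 0 := by
        refine ContinuousAt.mul continuousAt_const (ContinuousAt.pow ?_ _)
        exact ContinuousAt.rpow_const (by fun_prop) (Or.inl (by norm_num))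
      have h := this.tendsto.mono_left (nhdsWithin_le_nhds (s := Set.Ioi 0))
      simpa using h
    obtain ⟨δ, ⟨hδb, hδ1⟩, hδ0⟩ := ((hcont.eventually (gt_mem_nhds hb)).and
      (nhdsWithin_le_nhds (gt_mem_nhds (zero_lt_one' ℝ)))).and self_mem_nhdsWithin |>.exists
    have hδ0 : 0 < δ := hδ0
    set t : ℝ := δ / (n + 1) with ht
    have htp : 0 < t := by positivity
    have hF2 : Tendsto (fun x => P.real {ω | t * x < X 0 ω}) atTop (𝓝 0) :=
      h0.comp (tendsto_id.const_mul_atTop htp)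
    have hlim : Tendsto (fun x => (n.choose (k + 1) : ℝ) *
        (P.real {ω | (1 - δ) * x < X 0 ω} / P.real {ω | x < X 0 ω}) ^ (k + 1) +
        (n.choose (k + 2) : ℝ) * ((P.real {ω | t * x < X 0 ω} / P.real {ω | x < X 0 ω}) ^ (k + 1) *
          P.real {ω | t * x < X 0 ω})) atTop
        (𝓝 ((n.choose (k + 1) : ℝ) * ((1 - δ) ^ (-α)) ^ (k + 1) +
          (n.choose (k + 2) : ℝ) * ((t ^ (-α)) ^ (k + 1) * 0))) :=
      (((hRV _ (by linarith)).pow _).const_mul _).add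
        ((((hRV t htp).pow _).mul hF2).const_mul _)
    rw [mul_zero, mul_zero, add_zero] at hlim
    filter_upwards [hlim.eventually (gt_mem_nhds hδb), eventually_gt_atTop 0] with x hx hx0
    refine lt_of_le_of_lt ?_ hx
    have hFx := hFpos x hx0
    rw [div_le_iff₀ (by positivity)]
    have hsub : {ω | (fun i => X i ω) ∈ Tres k n x} ⊆
        {ω | k + 1 ≤ ((Finset.range n).filter (fun i => (1 - δ) * x < X i ω)).card} ∪
        {ω | k + 2 ≤ ((Finset.range n).filter (fun i => t * x < X i ω)).card} := by
      intro ω hω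
      exact comb_D (fun i => X i ω) k n x δ hx0 hδ0 hδ1 hω
    calc _ ≤ _ := measureReal_mono hsub (measure_ne_top _ _)
      _ ≤ _ := measureReal_union_le _ _
      _ ≤ _ := add_le_add (count_upper P hX hind hid (k + 1) n ((1 - δ) * x))
            (count_upper P hX hind hid (k + 2) n (t * x))
      _ = _ := by
        generalize P.real {ω | x < X 0 ω} = a at hFx
        generalize P.real {ω | t * x < X 0 ω} = b
        generalize P.real {ω | (1 - δ) * x < X 0 ω} = d
        rw [div_pow, div_pow]
        field_simp
        ring

theorem dom_step (hX : ∀ i, Measurable (X i)) (hX0 : ∀ i ω, 0 ≤ X i ω)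
    (hind : iIndepFun X P) (hid : ∀ i, IdentDistrib (X i) (X 0) P P)
    (k n M : ℕ) {y Q C : ℝ} (hy : 0 < y) (hQ : 0 < Q) (hC : 0 < C)
    (hmean : ∫ ω, min (X 0 ω) y ∂P ≤ C * (y * Q)) (hnQ : n * Q ≤ 1) (hn : 0 < n) :
    P.real {ω | (fun i => X i ω) ∈ Tres k n (M * y)} ≤
      (n : ℝ) ^ (k + 1) * P.real {ω | y < X 0 ω} ^ (k + 1) + Real.exp C * (n * Q) ^ M := by
  have hsub : {ω | (fun i => X i ω) ∈ Tres k n (M * y)} ⊆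
      {ω | k + 1 ≤ ((Finset.range n).filter (fun i => y < X i ω)).card} ∪
      {ω | M * y < ∑ i ∈ Finset.range n, min (X i ω) y} := by
    intro ω hω
    exact comb_C (fun i => X i ω) (fun i => hX0 i ω) k n _ y hy.le hω
  calc _ ≤ _ := measureReal_mono hsub (measure_ne_top _ _)
    _ ≤ _ := measureReal_union_le _ _
    _ ≤ _ := add_le_add (count_upper P hX hind hid (k + 1) n y)
          (chernoff P hX hX0 hind hid hy hQ hC hmean n M hn hnQ)
    _ ≤ _ := by
      gcongr
      exact_mod_cast Nat.choose_le_pow n (k + 1)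

theorem Tres_zero (k : ℕ) {x : ℝ} (hx : 0 < x) :
    {ω | (fun i => X i ω) ∈ Tres k 0 x} = ∅ := by
  ext ω
  simp only [Tres, Set.mem_ofPred_eq, Set.mem_empty_iff_false, iff_false]
  intro h
  have := h ∅ (by simp) (by simp)
  simp at this
  linarith

theorem dom_lt (hX : ∀ i, Measurable (X i)) (hX0 : ∀ i ω, 0 ≤ X i ω)
    (hind : iIndepFun X P) (hid : ∀ i, IdentDistrib (X i) (X 0) P P)
    (hFpos : ∀ x > (0 : ℝ), 0 < P.real {ω | x < X 0 ω}) {α : ℝ} (hα1 : α < 1)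
    (hRV : ∀ t > (0 : ℝ), Tendsto (fun x : ℝ =>
      P.real {ω | t * x < X 0 ω} / P.real {ω | x < X 0 ω}) atTop (𝓝 (t ^ (-α)))) (k : ℕ) :
    ∃ C, ∀ᶠ x in atTop, ∀ n : ℕ, P.real {ω | (fun i => X i ω) ∈ Tres k n x} ≤
      C * (n : ℝ) ^ (k + 1) * P.real {ω | x < X 0 ω} ^ (k + 1) := by
  set F : ℝ → ℝ := fun x => P.real {ω | x < X 0 ω} with hF
  have hanti : Antitone F := fun a b hab => measureReal_mono (fun ω hω => lt_of_le_of_lt hab hω) (measure_ne_top _ _)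
  -- choice of ratio
  have h2 : (1 : ℝ) / 2 < 2 ^ (-α) := by
    have := Real.rpow_lt_rpow_of_exponent_lt one_lt_two (show (-1 : ℝ) < -α by linarith)
    rw [Real.rpow_neg_one] at this
    linarith
  obtain ⟨ρ, hρ1, hρ2⟩ := exists_between h2
  obtain ⟨y0, hy0⟩ := eventually_atTop.1
    (((hRV 2 two_pos).eventually (lt_mem_nhds hρ2)).and (eventually_gt_atTop 0))
  have hy0p : 0 < y0 := (hy0 y0 le_rfl).2
  obtain ⟨C, hC, hmean⟩ := trunc_mean P (hX 0) (hX0 0) (q := F) (r := 2 * ρ) hy0p (by linarith)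
    (fun y hy => hFpos y (by linarith)) (fun y _ h => hanti h) (fun y hy => le_rfl)
    (fun y hy => by
      have := (hy0 y hy).1
      rw [lt_div_iff₀ (hFpos y (by linarith))] at this
      simp only [hF]
      linarith)
  have hM : (0 : ℝ) < (k + 1 : ℕ) := by positivity
  set t : ℝ := 1 / (k + 1 : ℕ) with ht
  have htp : 0 < t := by positivity
  refine ⟨(1 + Real.exp C) * (t ^ (-α) + 1) ^ (k + 1), ?_⟩
  filter_upwards [(hRV t htp).eventually (gt_mem_nhds (lt_add_one _)), eventually_gt_atTop 0,
    (tendsto_id.const_mul_atTop htp).eventually_ge_atTop y0] with x hx1 hx0 hxy n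
  simp only [id] at hxy
  have hFx : 0 < F x := hFpos x hx0
  have hFt : 0 < F (t * x) := hFpos _ (by positivity)
  have hr : F (t * x) ≤ (t ^ (-α) + 1) * F x := by
    rw [div_lt_iff₀ hFx] at hx1
    exact hx1.le
  rcases Nat.eq_zero_or_pos n with rfl | hn
  · rw [Tres_zero k hx0]; simp
  have key : P.real {ω | (fun i => X i ω) ∈ Tres k n x} ≤
      (1 + Real.exp C) * (n * F (t * x)) ^ (k + 1) := by
    by_cases h1 : n * F (t * x) ≤ 1
    · have := dom_step P hX hX0 hind hid k n (k + 1) (y := t * x) (by positivity) hFt hC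
        (hmean _ hxy) h1 hn
      rw [show ((k + 1 : ℕ) : ℝ) * (t * x) = x by rw [ht]; field_simp] at this
      refine this.trans (le_of_eq ?_)
      simp only [hF]
      ring
    · push Not at h1
      have a1 : 1 ≤ (n * F (t * x)) ^ (k + 1) := one_le_pow₀ h1.le
      have a2 := Real.exp_pos C
      have : P.real {ω | (fun i => X i ω) ∈ Tres k n x} ≤ 1 := measureReal_le_one
      nlinarith
  calc _ ≤ _ := key
    _ ≤ (1 + Real.exp C) * (n * ((t ^ (-α) + 1) * F x)) ^ (k + 1) := by
        have := Real.exp_pos C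
        gcongr
    _ = _ := by simp only [hF, mul_pow]; ring

theorem dom_ge (hX : ∀ i, Measurable (X i)) (hX0 : ∀ i ω, 0 ≤ X i ω)
    (hind : iIndepFun X P) (hid : ∀ i, IdentDistrib (X i) (X 0) P P)
    (hFpos : ∀ x > (0 : ℝ), 0 < P.real {ω | x < X 0 ω}) {α : ℝ} (hα1 : 1 ≤ α)
    (hRV : ∀ t > (0 : ℝ), Tendsto (fun x : ℝ =>
      P.real {ω | t * x < X 0 ω} / P.real {ω | x < X 0 ω}) atTop (𝓝 (t ^ (-α)))) (k : ℕ)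
    {p : ℝ} (hp : (k + 1 : ℝ) * α < p) :
    ∃ C, ∀ᶠ x in atTop, ∀ n : ℕ, P.real {ω | (fun i => X i ω) ∈ Tres k n x} ≤
      C * (n : ℝ) ^ p * P.real {ω | x < X 0 ω} ^ (k + 1) := by
  set F : ℝ → ℝ := fun x => P.real {ω | x < X 0 ω} with hF
  have hanti : Antitone F := fun a b hab => measureReal_mono (fun ω hω => lt_of_le_of_lt hab hω) (measure_ne_top _ _)
  have hk1 : (0 : ℝ) < k + 1 := by positivity
  have hp1 : (k + 1 : ℝ) ≤ p := by nlinarith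
  have hp0 : 0 < p := by linarith
  -- choice of θ
  obtain ⟨θ, hθ1, hθ2⟩ := exists_between (show (k + 1 : ℝ) * α / p < 1 by rwa [div_lt_one hp0])
  have hθ0 : 0 < θ := lt_trans (by positivity) hθ1
  rw [div_lt_iff₀ hp0] at hθ1
  set β : ℝ := θ * p / (k + 1) with hβ
  have hβα : α < β := by rw [hβ, lt_div_iff₀ hk1]; linarith
  obtain ⟨c, hc, x1, hx1, hlow⟩ := tail_lower hanti hFpos (by linarith) hβα (hRV 2 two_pos)
  obtain ⟨D, hD, x2, hx2, hup⟩ := tail_upper (fun x => measureReal_le_one) hFpos hθ0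
    (lt_of_lt_of_le hθ2 hα1) (hRV 2 two_pos)
  set q : ℝ → ℝ := fun y => D * y ^ (-θ) with hq
  have hqpos : ∀ y > 0, 0 < q y := fun y hy => mul_pos hD (Real.rpow_pos_of_pos hy _)
  obtain ⟨C, hC, hmean⟩ := trunc_mean P (hX 0) (hX0 0) (q := q) (r := 2 * 2 ^ (-θ)) hx2
    (by
      have := Real.rpow_lt_rpow_of_exponent_lt one_lt_two (show (-1 : ℝ) < -θ by linarith)
      rw [Real.rpow_neg_one] at this
      linarith)
    (fun y hy => hqpos y (by linarith))
    (fun y h1 h => by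
      simp only [hq]
      have : (2 * x2) ^ (-θ) ≤ y ^ (-θ) := Real.rpow_le_rpow_of_nonpos (by linarith) h (by linarith)
      gcongr)
    hup
    (fun y hy => by
      simp only [hq]
      rw [Real.mul_rpow (by norm_num) (by linarith)]
      exact le_of_eq (by ring))
  obtain ⟨M, hM⟩ := exists_nat_ge p
  have hMp : (0 : ℝ) < M := by linarith
  set t : ℝ := 1 / M with ht
  have htp : 0 < t := by positivity
  refine ⟨(t ^ (-α) + 1) ^ (k + 1) + (1 + Real.exp C) * ((D * t ^ (-θ)) ^ p * (c ^ (k + 1))⁻¹), ?_⟩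
  filter_upwards [(hRV t htp).eventually (gt_mem_nhds (lt_add_one _)), eventually_gt_atTop 0,
    (tendsto_id.const_mul_atTop htp).eventually_ge_atTop x2, eventually_ge_atTop x1] with x hxr hx0 hxy hxx1 n
  simp only [id] at hxy
  have htx : 0 < t * x := by positivity
  have hFx : 0 < F x := hFpos x hx0
  have hFt : 0 < F (t * x) := hFpos _ htx
  have hr : F (t * x) ≤ (t ^ (-α) + 1) * F x := by
    rw [div_lt_iff₀ hFx] at hxr
    exact hxr.le
  have hqt := hqpos _ htx
  have hqp : q (t * x) ^ p ≤ (D * t ^ (-θ)) ^ p * (c ^ (k + 1))⁻¹ * F x ^ (k + 1) := by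
    have e1 : q (t * x) ^ p = (D * t ^ (-θ)) ^ p * x ^ (-(θ * p)) := by
      simp only [hq]
      rw [Real.mul_rpow htp.le hx0.le, ← mul_assoc, Real.mul_rpow (by positivity) (by positivity),
        ← Real.rpow_mul hx0.le]
      congr 2; ring
    have e2 : c ^ (k + 1) * x ^ (-(θ * p)) ≤ F x ^ (k + 1) := by
      have := pow_le_pow_left₀ (by positivity) (hlow x hxx1) (k + 1)
      refine le_trans (le_of_eq ?_) this
      rw [mul_pow, ← Real.rpow_natCast (x ^ (-β)), ← Real.rpow_mul hx0.le]
      congr 2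
      rw [hβ]; push_cast; field_simp
    rw [e1, mul_assoc]
    gcongr
    rw [inv_mul_eq_div, le_div_iff₀ (by positivity)]
    linarith
  rcases Nat.eq_zero_or_pos n with rfl | hn
  · rw [Tres_zero k hx0]
    simp [Real.zero_rpow hp0.ne']
  have hn1 : (1 : ℝ) ≤ n := by exact_mod_cast hn
  have key : P.real {ω | (fun i => X i ω) ∈ Tres k n x} ≤
      (n : ℝ) ^ p * F (t * x) ^ (k + 1) + (1 + Real.exp C) * (n * q (t * x)) ^ p := by
    have a2 := Real.exp_pos C
    by_cases h1 : n * q (t * x) ≤ 1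
    · have := dom_step P hX hX0 hind hid k n M (y := t * x) htx hqt hC
        (hmean _ hxy) h1 hn
      rw [show (M : ℝ) * (t * x) = x by rw [ht]; field_simp] at this
      have b1 : (n : ℝ) ^ (k + 1) ≤ (n : ℝ) ^ p := by
        rw [← Real.rpow_natCast]
        exact Real.rpow_le_rpow_of_exponent_le hn1 (by push_cast; exact hp1)
      have b2 : (n * q (t * x)) ^ M ≤ (n * q (t * x)) ^ p := by
        rw [← Real.rpow_natCast]
        exact Real.rpow_le_rpow_of_exponent_ge (by positivity) h1 hM
      calc _ ≤ _ := this
        _ ≤ (n : ℝ) ^ p * F (t * x) ^ (k + 1) + Real.exp C * (n * q (t * x)) ^ p := by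
          gcongr
        _ ≤ _ := by gcongr; linarith
    · push Not at h1
      have a1 : 1 ≤ (n * q (t * x)) ^ p := Real.one_le_rpow h1.le hp0.le
      have a3 : 0 ≤ (n : ℝ) ^ p * F (t * x) ^ (k + 1) := by positivity
      have : P.real {ω | (fun i => X i ω) ∈ Tres k n x} ≤ 1 := measureReal_le_one
      nlinarith
  have := Real.exp_pos C
  calc _ ≤ _ := key
    _ = (n : ℝ) ^ p * F (t * x) ^ (k + 1) + (1 + Real.exp C) * ((n : ℝ) ^ p * q (t * x) ^ p) := by
        rw [Real.mul_rpow (by positivity) hqt.le]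
    _ ≤ (n : ℝ) ^ p * ((t ^ (-α) + 1) * F x) ^ (k + 1) + (1 + Real.exp C) * ((n : ℝ) ^ p *
        ((D * t ^ (-θ)) ^ p * (c ^ (k + 1))⁻¹ * F x ^ (k + 1))) := by
        gcongr
    _ = _ := by rw [mul_pow]; ring

/-- expectations of functions of `N` as sums -/
theorem hasSum_N {N : Ω → ℕ} (hN : Measurable N) (f : ℕ → ℝ) (hf : Integrable (fun ω => f (N ω)) P) :
    HasSum (fun n => P.real {ω | N ω = n} * f n) (∫ ω, f (N ω) ∂P) := by
  have hm : ∀ n, MeasurableSet {ω | N ω = n} := fun n => hN (measurableSet_singleton n)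
  have hU : (⋃ n, {ω | N ω = n}) = Set.univ := by ext ω; simp
  have h := hasSum_integral_iUnion (μ := P) (s := fun n => {ω | N ω = n}) (f := fun ω => f (N ω)) hm
    (fun a b hab => Set.disjoint_left.2 fun ω h1 h2 => hab (h1.symm.trans h2))
    (by rw [hU]; exact hf.integrableOn)
  rw [hU, setIntegral_univ] at h
  refine h.congr_fun ?_ |> id
  intro n
  rw [setIntegral_congr_fun (hm n) (g := fun _ => f n) (fun ω hω => by
    show f (N ω) = f n
    rw [show N ω = n from hω])]
  simp

theorem mixture {N : Ω → ℕ} (hN : Measurable N) (E : ℕ → ℝ → Set Ω) (hE : ∀ n x, MeasurableSet (E n x))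
    (hI : ∀ n x, P.real ({ω | N ω = n} ∩ E n x) = P.real {ω | N ω = n} * P.real (E n x))
    (G : ℝ → ℝ) (hG : ∀ᶠ x in atTop, 0 < G x) (c w : ℕ → ℝ) (C : ℝ)
    (hlim : ∀ n, Tendsto (fun x => P.real (E n x) / G x) atTop (𝓝 (c n)))
    (hdom : ∀ᶠ x in atTop, ∀ n, P.real (E n x) ≤ C * w n * G x)
    (hw : Integrable (fun ω => w (N ω)) P) (hc : Integrable (fun ω => c (N ω)) P) :
    Tendsto (fun x => P.real {ω | ω ∈ E (N ω) x} / G x) atTop (𝓝 (∫ ω, c (N ω) ∂P)) := by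
  have hm : ∀ n, MeasurableSet {ω | N ω = n} := fun n => hN (measurableSet_singleton n)
  have hsum : ∀ x, P.real {ω | ω ∈ E (N ω) x} / G x =
      ∑' n, P.real {ω | N ω = n} * (P.real (E n x) / G x) := by
    intro x
    have e : {ω | ω ∈ E (N ω) x} = ⋃ n, ({ω | N ω = n} ∩ E n x) := by
      ext ω; simp
    have e2 : P.real {ω | ω ∈ E (N ω) x} = ∑' n, P.real {ω | N ω = n} * P.real (E n x) := by
      rw [measureReal_def, e, measure_iUnion, ENNReal.tsum_toReal_eq (fun n => measure_ne_top _ _)]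
      · exact tsum_congr fun n => hI n x
      · exact fun a b hab => Set.disjoint_left.2 fun ω h1 h2 => hab (h1.1.symm.trans h2.1)
      · exact fun n => (hm n).inter (hE n x)
    rw [e2, ← tsum_div_const]
    exact tsum_congr fun n => by ring
  simp_rw [hsum]
  rw [← (hasSum_N P hN c hc).tsum_eq]
  refine tendsto_tsum_of_dominated_convergence
    (bound := fun n => C * (P.real {ω | N ω = n} * w n)) ((hasSum_N P hN w hw).summable.mul_left C)
    (fun n => (hlim n).const_mul _) ?_
  filter_upwards [hG, hdom] with x hx hd n
  rw [Real.norm_of_nonneg (by positivity)]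
  calc _ ≤ P.real {ω | N ω = n} * (C * w n) := by
        gcongr
        rw [div_le_iff₀ hx]; exact hd n
    _ = _ := by ring

theorem indep_fin {N : Ω → ℕ}
    (hIndep : ∀ (j n : ℕ) (B : ℕ → Set ℝ), (∀ i, MeasurableSet (B i)) →
      P ({ω | N ω = j} ∩ ⋂ i ∈ Finset.range n, {ω | X i ω ∈ B i})
        = P {ω | N ω = j} * ∏ i ∈ Finset.range n, P {ω | X i ω ∈ B i})
    (j : ℕ) (S : Finset ℕ) (t : ℕ → Set ℝ) (ht : ∀ i ∈ S, MeasurableSet (t i)) :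
    P ({ω | N ω = j} ∩ ⋂ i ∈ S, X i ⁻¹' t i) = P {ω | N ω = j} * ∏ i ∈ S, P (X i ⁻¹' t i) := by
  classical
  obtain ⟨n, hn⟩ : ∃ n, S ⊆ Finset.range n := ⟨S.sup id + 1, fun i hi =>
    Finset.mem_range.2 (Nat.lt_succ_of_le (Finset.le_sup (f := id) hi))⟩
  have h := hIndep j n (fun i => if i ∈ S then t i else Set.univ) (by
    intro i; split_ifs with h
    · exact ht i h
    · exact MeasurableSet.univ)
  have e1 : (⋂ i ∈ Finset.range n, {ω | X i ω ∈ if i ∈ S then t i else Set.univ}) =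
      ⋂ i ∈ S, X i ⁻¹' t i := by
    ext ω
    simp only [Set.mem_iInter, Set.mem_preimage]
    constructor
    · intro h i hi
      have := h i (hn hi)
      simpa [hi] using this
    · intro h i _
      by_cases hi : i ∈ S
      · simpa [hi] using h i hi
      · simp [hi]
  have e2 : ∏ i ∈ Finset.range n, P {ω | X i ω ∈ if i ∈ S then t i else Set.univ} =
      ∏ i ∈ S, P (X i ⁻¹' t i) := by
    rw [← Finset.prod_subset hn]
    · refine Finset.prod_congr rfl fun i hi => ?_
      simp only [hi, if_true]; rfl
    · intro i _ hi
      simp [hi]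
  rw [e1, e2] at h
  exact h

theorem indep_X (hX : ∀ i, Measurable (X i)) {N : Ω → ℕ} (hN : Measurable N)
    (hf : ∀ (j : ℕ) (S : Finset ℕ) (t : ℕ → Set ℝ), (∀ i ∈ S, MeasurableSet (t i)) →
    P ({ω | N ω = j} ∩ ⋂ i ∈ S, X i ⁻¹' t i) = P {ω | N ω = j} * ∏ i ∈ S, P (X i ⁻¹' t i)) :
    iIndepFun X P := by
  rw [iIndepFun_iff_measure_inter_preimage_eq_mul]
  intro S t ht
  have hm : ∀ n, MeasurableSet {ω | N ω = n} := fun n => hN (measurableSet_singleton n)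
  have hS : MeasurableSet (⋂ i ∈ S, X i ⁻¹' t i) :=
    Finset.measurableSet_biInter _ fun i hi => hX i (ht i hi)
  have hdis : Pairwise (Function.onFun Disjoint (fun n => {ω | N ω = n})) :=
    fun a b hab => Set.disjoint_left.2 fun ω h1 h2 => hab (h1.symm.trans h2)
  have hU : (⋃ n, {ω | N ω = n}) = Set.univ := by ext ω; simp
  have h1 : ∑' j, P {ω | N ω = j} = 1 := by
    rw [← measure_iUnion hdis hm, hU, measure_univ]
  have h2 : P (⋂ i ∈ S, X i ⁻¹' t i) = ∑' j, P ({ω | N ω = j} ∩ ⋂ i ∈ S, X i ⁻¹' t i) := by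
    rw [← measure_iUnion (fun a b hab => (hdis hab).mono Set.inter_subset_left Set.inter_subset_left)
      (fun n => (hm n).inter hS), ← Set.iUnion_inter, hU, Set.univ_inter]
  rw [h2]
  simp_rw [hf _ S t ht]
  rw [ENNReal.tsum_mul_right, h1, one_mul]

theorem indep_NX (hX : ∀ i, Measurable (X i)) {N : Ω → ℕ} (hN : Measurable N)
    (hf : ∀ (j : ℕ) (S : Finset ℕ) (t : ℕ → Set ℝ), (∀ i ∈ S, MeasurableSet (t i)) →
    P ({ω | N ω = j} ∩ ⋂ i ∈ S, X i ⁻¹' t i) = P {ω | N ω = j} * ∏ i ∈ S, P (X i ⁻¹' t i))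
    (j : ℕ) (T : Set (ℕ → ℝ)) (hT : MeasurableSet T) :
    P.real ({ω | N ω = j} ∩ {ω | (fun i => X i ω) ∈ T}) =
      P.real {ω | N ω = j} * P.real {ω | (fun i => X i ω) ∈ T} := by
  have hm : MeasurableSet {ω | N ω = j} := hN (measurableSet_singleton j)
  have hXs := seq_meas hX
  have hind := indep_X P hX hN hf
  have h : (P.restrict {ω | N ω = j}).map (fun ω i => X i ω) =
      P {ω | N ω = j} • P.map (fun ω i => X i ω) := by
    refine ext_of_generate_finite _ generateFrom_squareCylinders.symm
      (isPiSystem_squareCylinders (fun i => MeasurableSpace.isPiSystem_measurableSet)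
        fun i => by simp) ?_ ?_
    · rintro _ ⟨S, t, ht, rfl⟩
      have ht' : ∀ i, MeasurableSet (t i) := fun i => ht i (Set.mem_univ i)
      have hSm : MeasurableSet ((S : Set ℕ).pi t) := MeasurableSet.pi S.countable_toSet fun i _ => ht' i
      have e : (fun ω i => X i ω) ⁻¹' ((S : Set ℕ).pi t) = ⋂ i ∈ S, X i ⁻¹' t i := by
        ext ω; simp [Set.mem_pi]
      rw [Measure.map_apply hXs hSm, Measure.smul_apply, Measure.map_apply hXs hSm,
        Measure.restrict_apply (hXs hSm), e, Set.inter_comm, hf j S t (fun i _ => ht' i), smul_eq_mul,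
        hind.measure_inter_preimage_eq_mul S (fun i _ => ht' i)]
    · rw [Measure.map_apply hXs MeasurableSet.univ, Measure.smul_apply,
        Measure.map_apply hXs MeasurableSet.univ]
      simp
  have h2 := congrArg (fun m => m T) h
  simp only [Measure.smul_apply, smul_eq_mul] at h2
  rw [Measure.map_apply hXs hT, Measure.map_apply hXs hT, Measure.restrict_apply (hXs hT),
    Set.inter_comm] at h2
  have h3 := congrArg ENNReal.toReal h2
  rw [ENNReal.toReal_mul] at h3
  exact h3
end

/-- Tail equivalence for the residual risk after removing the `k` largest claims
(Proposition 4.4 of the paper): both the residual sum and the `(k+1)`-th largest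
order statistic have tail asymptotics `(E[N^{[k+1]}]/(k+1)!)·F̄(x)^{k+1}`. -/
theorem stmt_18
    {Ω : Type*} [MeasurableSpace Ω] (P : Measure Ω) [IsProbabilityMeasure P]
    (X : ℕ → Ω → ℝ) (hXmeas : ∀ i, Measurable (X i)) (hXpos : ∀ i ω, 0 ≤ X i ω)
    (hXid : ∀ i, Measure.map (X i) P = Measure.map (X 0) P)
    (α : ℝ) (hα : 0 < α)
    (hFpos : ∀ x > (0 : ℝ), 0 < (P {ω | x < X 0 ω}).toReal)
    (hRV : ∀ t > (0 : ℝ), Tendsto (fun x : ℝ =>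
      (P {ω | t * x < X 0 ω}).toReal / (P {ω | x < X 0 ω}).toReal) atTop (𝓝 (t ^ (-α))))
    (k : ℕ) (N : Ω → ℕ) (hNmeas : Measurable N)
    (hNmom : Integrable (fun ω => (N ω : ℝ) ^ (k + 1)) P)
    (hNp : 1 ≤ α → ∃ p : ℝ, (k + 1 : ℝ) * α < p ∧
      Integrable (fun ω => (N ω : ℝ) ^ p) P)
    (hIndep : ∀ (j n : ℕ) (B : ℕ → Set ℝ), (∀ i, MeasurableSet (B i)) →
      P ({ω | N ω = j} ∩ ⋂ i ∈ Finset.range n, {ω | X i ω ∈ B i})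
        = P {ω | N ω = j} * ∏ i ∈ Finset.range n, P {ω | X i ω ∈ B i}) :
    Tendsto (fun x : ℝ =>
        (P {ω | x < (∑ i ∈ Finset.range (N ω), X i ω) -
            sSup {y : ℝ | ∃ s : Finset ℕ,
              s ⊆ Finset.range (N ω) ∧ s.card ≤ k ∧ y = ∑ i ∈ s, X i ω}}).toReal /
          (P {ω | x < X 0 ω}).toReal ^ (k + 1))
      atTop
      (𝓝 ((∫ ω, ∏ m ∈ Finset.range (k + 1), ((N ω : ℝ) - (m : ℝ)) ∂P) /
        (Nat.factorial (k + 1) : ℝ)))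
    ∧ Tendsto (fun x : ℝ =>
        (P {ω | k + 1 ≤ ((Finset.range (N ω)).filter (fun i => x < X i ω)).card}).toReal /
          (P {ω | x < X 0 ω}).toReal ^ (k + 1))
      atTop
      (𝓝 ((∫ ω, ∏ m ∈ Finset.range (k + 1), ((N ω : ℝ) - (m : ℝ)) ∂P) /
        (Nat.factorial (k + 1) : ℝ))) := by
  have hfin := indep_fin P hIndep
  have hind := indep_X P hXmeas hNmeas hfin
  have hNX := indep_NX P hXmeas hNmeas hfin
  have hid : ∀ i, IdentDistrib (X i) (X 0) P P := fun i =>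
    ⟨(hXmeas i).aemeasurable, (hXmeas 0).aemeasurable, hXid i⟩
  have hXs := seq_meas hXmeas
  have hFpos' : ∀ x > (0 : ℝ), 0 < P.real {ω | x < X 0 ω} := hFpos
  have hGpos : ∀ᶠ x in atTop, 0 < P.real {ω | x < X 0 ω} ^ (k + 1) := by
    filter_upwards [eventually_gt_atTop 0] with x hx
    exact pow_pos (hFpos' x hx) _
  have hci : Integrable (fun ω => ((N ω).choose (k + 1) : ℝ)) P := by
    refine hNmom.mono' ?_ (ae_of_all _ fun ω => ?_)
    · exact ((measurable_from_nat (f := fun n : ℕ => (n.choose (k + 1) : ℝ))).comp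
        hNmeas).aestronglyMeasurable
    · rw [Real.norm_of_nonneg (by positivity)]
      exact_mod_cast Nat.choose_le_pow (N ω) (k + 1)
  have hval : (∫ ω, ∏ m ∈ Finset.range (k + 1), ((N ω : ℝ) - (m : ℝ)) ∂P) /
        (Nat.factorial (k + 1) : ℝ) = ∫ ω, ((N ω).choose (k + 1) : ℝ) ∂P := by
    rw [← integral_div]
    congr 1
    ext ω
    rw [← descPochhammer_eval_eq_prod_range, descPochhammer_eval_eq_descFactorial,
      Nat.descFactorial_eq_factorial_mul_choose]
    push_cast
    have : ((k + 1).factorial : ℝ) ≠ 0 := by positivity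
    field_simp
  rw [hval]
  constructor
  · have hdom : ∃ (w : ℕ → ℝ) (C : ℝ), Integrable (fun ω => w (N ω)) P ∧
        ∀ᶠ x in atTop, ∀ n : ℕ, P.real {ω | (fun i => X i ω) ∈ Tres k n x} ≤
          C * w n * P.real {ω | x < X 0 ω} ^ (k + 1) := by
      rcases lt_or_ge α 1 with h | h
      · obtain ⟨C, hC⟩ := dom_lt P hXmeas hXpos hind hid hFpos h hRV k
        exact ⟨fun n => (n : ℝ) ^ (k + 1), C, hNmom, hC⟩
      · obtain ⟨p, hp, hpi⟩ := hNp h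
        obtain ⟨C, hC⟩ := dom_ge P hXmeas hXpos hind hid hFpos h hRV k hp
        exact ⟨fun n => (n : ℝ) ^ p, C, hpi, hC⟩
    obtain ⟨w, C, hw, hC⟩ := hdom
    have := mixture P hNmeas (fun n x => {ω | (fun i => X i ω) ∈ Tres k n x})
      (fun n x => hXs (meas_Tres k n x)) (fun n x => hNX n _ (meas_Tres k n x))
      _ hGpos (fun n => (n.choose (k + 1) : ℝ)) w C
      (fun n => lim_res P hXmeas hXpos hind hid hFpos hRV k n) hC hw hci
    refine this.congr fun x => ?_
    rw [measureReal_def, measureReal_def]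
    congr 3
    ext ω
    exact (resid_iff (fun i => X i ω) k (N ω) x).symm
  · exact mixture P hNmeas (fun n x => {ω | (fun i => X i ω) ∈ Tcount k n x})
      (fun n x => hXs (meas_Tcount k n x)) (fun n x => hNX n _ (meas_Tcount k n x))
      _ hGpos (fun n => (n.choose (k + 1) : ℝ)) (fun n => (n.choose (k + 1) : ℝ)) 1
      (fun n => lim_count P hXmeas hind hid hFpos k n)
      (Eventually.of_forall fun x n => by
        rw [one_mul]
        exact count_upper P hXmeas hind hid (k + 1) n x) hci hci
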